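/- With Z^n defined as above, for all n ≥ 2 one has |Z^n| = 2^n (1/2 + 2^{-⌈n/2⌉}); equivalently, the probability over uniform x that S^{n-1}_λ(x_{≥1}) = 0 equals 1/2 + 2^{-⌈n/2⌉}. -/

import Mathlib

def AS (m : ℕ) (lam z : Fin m → ZMod 2) : ZMod 2 :=
  (∑ i : Fin m, ∑ j : Fin m, if i < j then z i * z j else 0) + ∑ i : Fin m, lam i * z i

def lamAlt (m : ℕ) : Fin m → ZMod 2 := fun i => ((i : ℕ) : ZMod 2)

def Zset (m : ℕ) : Finset (Fin (m + 1) → ZMod 2) :=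
  Finset.univ.filter (fun x => AS m (lamAlt m) (fun i => x i.succ) = 0)

/-!
For the nontrivial character `ψ` of `ZMod 2`, the number of zeros of a function `f` on a finite
type `α` satisfies `2 * #{f = 0} = |α| + ∑ x, ψ (f x)`, so it suffices to evaluate the character
sum of the quadratic form `S_λ`. With `t = z₀ + ⋯ + z_{m-1} + λ_m`, appending two coordinates
`a, b` to `z` adds `t * a + (t + 1 + a) * b` to the form, since `λ_{m+1} = λ_m + 1`. Summing over
`b` forces `a = t + 1`, and `t * (t + 1) = 0` in `ZMod 2`. Hence each pair of coordinates
contributes exactly a factor `2`.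
-/

open Finset

section

variable {R R' : Type*} [CommRing R] [Fintype R] [CommRing R'] [IsDomain R']
  {ψ : AddChar R R'}

lemma card_mul_card_zeros_eq_sum_addChar [DecidableEq R] {α : Type*} [Fintype α]
    (hψ : ψ.IsPrimitive) (f : α → R) :
    (Fintype.card R * #{x | f x = 0} : R') = ∑ y, ∑ x, ψ (y * f x) := by
  rw [sum_comm]
  simp only [AddChar.sum_mulShift _ hψ, Nat.cast_ite, Nat.cast_zero, ← sum_filter, sum_const,
    nsmul_eq_mul, mul_comm]

lemma sum_sum_addChar_add_mul_add_add_mul (hψ : ψ.IsPrimitive) (c t u : R) :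
    ∑ a, ∑ b, ψ (c + t * a + (u + a) * b) = Fintype.card R * ψ (c - t * u) := by
  classical
  have sum_b (a : R) : ∑ b, ψ (c + t * a + (u + a) * b) =
      if a = -u then Fintype.card R * ψ (c - t * u) else 0 := by
    simp_rw [AddChar.map_add_eq_mul ψ (c + t * a), ← mul_sum, mul_comm (u + a),
      AddChar.sum_mulShift _ hψ, add_comm u, add_eq_zero_iff_eq_neg]
    split_ifs with h
    · rw [h, mul_neg, ← sub_eq_add_neg, mul_comm]
    · rw [Nat.cast_zero, mul_zero]
  simp only [sum_b, sum_ite_eq', mem_univ, if_true]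

end

lemma sum_fin_succ_pi_eq_sum_snoc {α M : Type*} [Fintype α] [AddCommMonoid M] {n : ℕ}
    (f : (Fin (n + 1) → α) → M) :
    ∑ x, f x = ∑ z : Fin n → α, ∑ a : α, f (Fin.snoc z a) := by
  rw [← (Fin.snocEquiv fun _ ↦ α).sum_comp, Fintype.sum_prod_type_right]
  rfl

lemma AS_snoc {m : ℕ} (lam : Fin (m + 1) → ZMod 2) (z : Fin m → ZMod 2) (a : ZMod 2) :
    AS (m + 1) lam (Fin.snoc z a) =
      AS m (Fin.init lam) z + (∑ i, z i + lam (Fin.last m)) * a := by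
  have not_last_lt (i : Fin m) : ¬ Fin.last m < i.castSucc := (Fin.le_last _).not_gt
  simp only [AS, Fin.init, Fin.sum_univ_castSucc, Fin.snoc_castSucc, Fin.snoc_last,
    Fin.castSucc_lt_castSucc_iff, Fin.castSucc_lt_last, not_last_lt, if_true, if_false,
    lt_irrefl, sum_add_distrib, sum_const_zero, ← sum_mul]
  ring

lemma AS_snoc_snoc {m : ℕ} {lam : Fin (m + 2) → ZMod 2}
    (hlam : lam (Fin.last (m + 1)) = lam (Fin.last m).castSucc + 1)
    (z : Fin m → ZMod 2) (a b : ZMod 2) :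
    AS (m + 2) lam (Fin.snoc (Fin.snoc z a : Fin (m + 1) → ZMod 2) b) =
      AS m (Fin.init (Fin.init lam)) z + (∑ i, z i + lam (Fin.last m).castSucc) * a +
        (∑ i, z i + lam (Fin.last m).castSucc + 1 + a) * b := by
  rw [AS_snoc, AS_snoc, Fin.sum_snoc, hlam, Fin.init]
  ring

section

variable {R : Type*} [CommRing R] [IsDomain R] {ψ : AddChar (ZMod 2) R}

lemma sum_addChar_AS_add_two (hψ : ψ.IsPrimitive) {m : ℕ} {lam : Fin (m + 2) → ZMod 2}
    (hlam : lam (Fin.last (m + 1)) = lam (Fin.last m).castSucc + 1) :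
    ∑ x, ψ (AS (m + 2) lam x) = 2 * ∑ z, ψ (AS m (Fin.init (Fin.init lam)) z) := by
  have mul_add_one (t : ZMod 2) : t * (t + 1) = 0 := by
    revert t
    decide
  simp only [sum_fin_succ_pi_eq_sum_snoc (n := m + 1), sum_fin_succ_pi_eq_sum_snoc (n := m),
    AS_snoc_snoc hlam, sum_sum_addChar_add_mul_add_add_mul hψ, mul_add_one, sub_zero, ZMod.card,
    Nat.cast_ofNat, mul_sum]

lemma sum_addChar_AS_lamAlt (hψ : ψ.IsPrimitive) :
    ∀ m : ℕ, ∑ z, ψ (AS m (lamAlt m) z) = 2 ^ ((m + 1) / 2)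
  | 0 => by simp [AS]
  | 1 => by simp [AS, lamAlt, ZMod.card]
  | m + 2 => by
    have alternates : lamAlt (m + 2) (Fin.last (m + 1)) =
        lamAlt (m + 2) (Fin.last m).castSucc + 1 := Nat.cast_succ m
    have init_init : Fin.init (Fin.init (lamAlt (m + 2))) = lamAlt m := rfl
    rw [sum_addChar_AS_add_two hψ alternates, init_init, sum_addChar_AS_lamAlt hψ m, ← pow_succ']
    congr 1
    omega

end

lemma two_mul_card_AS_lamAlt_zeros (m : ℕ) :
    2 * #{z | AS m (lamAlt m) z = 0} = 2 ^ m + 2 ^ ((m + 1) / 2) := by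
  have hψ := AddChar.zmodChar_primitive_of_primitive_root 2
    (IsPrimitiveRoot.neg_one (R := ℤ) 0 two_ne_zero.symm)
  have count := card_mul_card_zeros_eq_sum_addChar hψ (AS m (lamAlt m))
  have sum_zmod_two (g : ZMod 2 → ℤ) : ∑ y, g y = g 0 + g 1 := Fin.sum_univ_two g
  simp only [sum_zmod_two, zero_mul, one_mul, AddChar.map_zero_eq_one,
    sum_addChar_AS_lamAlt hψ, sum_const, card_univ, Fintype.card_pi_const, ZMod.card,
    nsmul_eq_mul, mul_one] at count
  exact_mod_cast count

lemma card_Zset (m : ℕ) : #(Zset m) = 2 ^ m + 2 ^ ((m + 1) / 2) := by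
  have free_head : #(Zset m) = 2 * #{z | AS m (lamAlt m) z = 0} := by
    simpa [ZMod.card] using! card_consEquiv_filter_piFinset
      (fun _ : Fin (m + 1) ↦ (univ : Finset (ZMod 2))) (fun z ↦ AS m (lamAlt m) z = 0)
  rw [free_head, two_mul_card_AS_lamAlt_zeros]

/-- |Z^n| = 2^n (1/2 + 2^{-⌈n/2⌉}) for n = m + 1 ≥ 2, where ⌈n/2⌉ = (m+2)/2 in ℕ. -/
theorem stmt6 (m : ℕ) (hm : 1 ≤ m) :
    ((Zset m).card : ℚ) = 2 ^ (m + 1) * (1 / 2 + (1 / 2 : ℚ) ^ ((m + 2) / 2)) := by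
  have split_exponent : (2 : ℚ) ^ (m + 1) = 2 ^ ((m + 1) / 2) * 2 ^ ((m + 2) / 2) := by
    rw [← pow_add]
    congr 1
    omega
  have cancel : (2 : ℚ) ^ (m + 1) * (1 / 2) ^ ((m + 2) / 2) = 2 ^ ((m + 1) / 2) := by
    rw [split_exponent, mul_assoc, ← mul_pow, mul_one_div_cancel two_ne_zero, one_pow, mul_one]
  rw [card_Zset, mul_add, cancel, pow_succ, mul_assoc, mul_one_div_cancel two_ne_zero, mul_one]
  norm_cast
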